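/- arXiv:2003.14302 — 2 statements merged into one kernel-verified Lean document; each statement's English description precedes it below -/
import Mathlib

section
/- Let V be a real vector space, K, L ⊆ V two convex sets, and x ∈ K ∩ L. Then (1) F_{K∩L}(x) = F_K(x) ∩ F_L(x); (2) ri(F_K(x) ∩ F_L(x)) = ri(F_K(x)) ∩ ri(F_L(x)); (3) aff(F_K(x) ∩ F_L(x)) = aff(F_K(x)) ∩ aff(F_L(x)). -/
variable {V : Type*} [AddCommGroup V] [Module ℝ V]

/-- `E` is an extreme subset of `K`: whenever a point of `E` is written as
`(1-l)•y + l•z` with `y, z ∈ K` and `l ∈ (0,1)`, both `y` and `z` lie in `E`. -/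
def IsExtremeSubset (K E : Set V) : Prop :=
  E ⊆ K ∧ ∀ x ∈ E, ∀ y ∈ K, ∀ z ∈ K, ∀ l : ℝ, l ∈ Set.Ioo (0:ℝ) 1 →
    x = (1 - l) • y + l • z → y ∈ E ∧ z ∈ E

/-- `F` is a face of `K`: a convex extreme subset of `K`. -/
def IsFaceOf (K F : Set V) : Prop := Convex ℝ F ∧ IsExtremeSubset K F

/-- The face of `K` generated by `x`: the smallest face of `K` containing `x`
(the intersection of all faces of `K` containing `x`). -/
def genFace (K : Set V) (x : V) : Set V := ⋂₀ {F | IsFaceOf K F ∧ x ∈ F}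

/-- The relative algebraic interior of `C`: all `x ∈ C` such that for every
`y` in the affine hull of `C` there is `ε > 0` with `x ± ε(y - x) ∈ C`. -/
def riSet (C : Set V) : Set V :=
  {x | x ∈ C ∧ ∀ y ∈ affineSpan ℝ C, ∃ ε : ℝ, 0 < ε ∧
    x + ε • (y - x) ∈ C ∧ x - ε • (y - x) ∈ C}

/-!
For convex `K ∋ x`, everything is encoded in the cone `C` of feasible directions of `K` at `x`:
the face generated by `x` is `K ∩ (x - C)`, its affine hull is `x + (C ∩ -C)`, and `y` lies in its
relative algebraic interior iff `x` and `y` generate the same face. A sufficiently short step along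
a feasible direction stays in `K`, so the cone of `K ∩ L` is the intersection of the two cones, and
this passes to all three descriptions.
-/

open Set Filter Topology

section FeasibleCone

variable {𝕜 E : Type*} [Field 𝕜] [LinearOrder 𝕜] [IsStrictOrderedRing 𝕜] [AddCommGroup E]
  [Module 𝕜 E] {K L : Set E} {x y v : E}

variable (𝕜) in
/-- The cone of feasible directions of `K` at `x`, generated by the displacements from `x` to
points of `K`. For convex `K ∋ x` it consists of the `v` with `x + ε • v ∈ K` for some `ε > 0`;
defining it as a hull makes it a cone with no assumption on `K` and `x`. -/
def feasibleCone (K : Set E) (x : E) : PointedCone 𝕜 E :=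
  PointedCone.hull 𝕜 ((x + ·) ⁻¹' K)

lemma sub_mem_feasibleCone (hy : y ∈ K) : y - x ∈ feasibleCone 𝕜 K x :=
  PointedCone.subset_hull (by simpa using hy)

lemma mem_feasibleCone_iff_exists (hK : Convex 𝕜 K) (hx : x ∈ K) :
    v ∈ feasibleCone 𝕜 K x ↔ ∃ ε : 𝕜, 0 < ε ∧ x + ε • v ∈ K := by
  constructor
  · intro hv
    induction hv using Submodule.span_induction with
    | mem v hv => exact ⟨1, one_pos, by simpa using hv⟩
    | zero => exact ⟨1, one_pos, by simpa using hx⟩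
    | add v w _ _ hv hw =>
      obtain ⟨ε, hε, hv⟩ := hv
      obtain ⟨δ, hδ, hw⟩ := hw
      refine ⟨ε * δ / (ε + δ), by positivity, ?_⟩
      convert convex_iff_div.1 hK hv hw hδ.le hε.le (by positivity) using 1
      match_scalars <;> field_simp <;> ring
    | smul r v _ hv =>
      obtain ⟨ε, hε, hv⟩ := hv
      obtain ⟨r, hr⟩ := r
      rcases hr.eq_or_lt with rfl | hr
      · exact ⟨1, one_pos, by simpa [Nonneg.mk_smul] using hx⟩
      · refine ⟨ε / r, by positivity, ?_⟩
        rwa [Nonneg.mk_smul, smul_smul, div_mul_cancel₀ _ hr.ne']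
  · rintro ⟨ε, hε, hv⟩
    rw [← PointedCone.smul_mem_iff _ hε]
    exact PointedCone.subset_hull hv

lemma mem_feasibleCone_iff_eventually [TopologicalSpace 𝕜] [OrderTopology 𝕜]
    (hK : Convex 𝕜 K) (hx : x ∈ K) :
    v ∈ feasibleCone 𝕜 K x ↔ ∀ᶠ ε in 𝓝[>] (0 : 𝕜), x + ε • v ∈ K := by
  rw [mem_feasibleCone_iff_exists hK hx]
  constructor
  · rintro ⟨δ, hδ, hv⟩
    filter_upwards [Ioc_mem_nhdsGT hδ] with ε hε
    have hε' : ε / δ ∈ Icc 0 1 := ⟨div_nonneg hε.1.le hδ.le, div_le_one_of_le₀ hε.2 hδ.le⟩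
    simpa [smul_smul, div_mul_cancel₀ ε hδ.ne'] using hK.add_smul_mem hx hv hε'
  · intro hv
    obtain ⟨ε, hv, hε⟩ := (hv.and self_mem_nhdsWithin).exists
    exact ⟨ε, hε, hv⟩

lemma feasibleCone_inter (hK : Convex 𝕜 K) (hL : Convex 𝕜 L) (hx : x ∈ K ∩ L) :
    feasibleCone 𝕜 (K ∩ L) x = feasibleCone 𝕜 K x ⊓ feasibleCone 𝕜 L x := by
  let : TopologicalSpace 𝕜 := Preorder.topology 𝕜
  have : OrderTopology 𝕜 := ⟨rfl⟩
  ext v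
  rw [Submodule.mem_inf, mem_feasibleCone_iff_eventually (hK.inter hL) hx,
    mem_feasibleCone_iff_eventually hK hx.1, mem_feasibleCone_iff_eventually hL hx.2]
  exact eventually_and

end FeasibleCone

section GeneratedFace

variable {K L F : Set V} {x y : V}

lemma self_mem_genFace (K : Set V) (x : V) : x ∈ genFace K x :=
  fun _ hF ↦ hF.2

lemma genFace_subset_of_isFaceOf (hF : IsFaceOf K F) (hx : x ∈ F) : genFace K x ⊆ F :=
  sInter_subset_of_mem ⟨hF, hx⟩

lemma isFaceOf_setOf_sub_mem_feasibleCone (hK : Convex ℝ K) (x : V) :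
    IsFaceOf K {y ∈ K | x - y ∈ feasibleCone ℝ K x} := by
  have left_mem : ∀ y, ∀ z ∈ K, ∀ l ∈ Ioo (0 : ℝ) 1,
      x - ((1 - l) • y + l • z) ∈ feasibleCone ℝ K x → x - y ∈ feasibleCone ℝ K x := by
    intro y z hz l hl hw
    have hsum := add_mem hw <|
      (feasibleCone ℝ K x).smul_mem hl.1.le (sub_mem_feasibleCone (𝕜 := ℝ) (x := x) hz)
    rw [← PointedCone.smul_mem_iff _ (sub_pos.2 hl.2)]
    convert hsum using 1
    module
  refine ⟨?_, sep_subset _ _, ?_⟩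
  · rintro y ⟨hy, hxy⟩ z ⟨hz, hxz⟩ a b ha hb hab
    refine ⟨hK hy hz ha hb hab, ?_⟩
    have hxw := (feasibleCone ℝ K x).convex hxy hxz ha hb hab
    rwa [smul_sub, smul_sub, sub_add_sub_comm, Convex.combo_self hab] at hxw
  · rintro _ ⟨-, hw⟩ y hy z hz l hl rfl
    refine ⟨⟨hy, left_mem y z hz l hl hw⟩,
      hz, left_mem z y hy (1 - l) ⟨sub_pos.2 hl.2, sub_lt_self 1 hl.1⟩ ?_⟩
    rwa [sub_sub_cancel, add_comm]

lemma genFace_eq_setOf_sub_mem_feasibleCone (hK : Convex ℝ K) (hx : x ∈ K) :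
    genFace K x = {y ∈ K | x - y ∈ feasibleCone ℝ K x} := by
  refine Subset.antisymm (genFace_subset_of_isFaceOf
    (isFaceOf_setOf_sub_mem_feasibleCone hK x) ⟨hx, by simp⟩) ?_
  rintro y ⟨hy, hxy⟩ F ⟨hF, hxF⟩
  obtain ⟨ε, hε, hz⟩ := (mem_feasibleCone_iff_exists hK hx).1 hxy
  have hl : 1 / (1 + ε) ∈ Ioo (0 : ℝ) 1 :=
    ⟨by positivity, (div_lt_one (by positivity)).2 (by linarith)⟩
  refine (hF.2.2 x hxF y hy _ hz _ hl ?_).1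
  match_scalars <;> field_simp
  ring

lemma mem_genFace (hK : Convex ℝ K) (hx : x ∈ K) :
    y ∈ genFace K x ↔ y ∈ K ∧ x - y ∈ feasibleCone ℝ K x := by
  rw [genFace_eq_setOf_sub_mem_feasibleCone hK hx, mem_sep_iff]

lemma isFaceOf_genFace (hK : Convex ℝ K) (hx : x ∈ K) : IsFaceOf K (genFace K x) := by
  rw [genFace_eq_setOf_sub_mem_feasibleCone hK hx]
  exact isFaceOf_setOf_sub_mem_feasibleCone hK x

lemma genFace_subset (hK : Convex ℝ K) (hx : x ∈ K) : genFace K x ⊆ K :=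
  (isFaceOf_genFace hK hx).2.1

lemma genFace_subset_genFace (hK : Convex ℝ K) (hx : x ∈ K) (hy : y ∈ genFace K x) :
    genFace K y ⊆ genFace K x :=
  genFace_subset_of_isFaceOf (isFaceOf_genFace hK hx) hy

lemma genFace_inter (hK : Convex ℝ K) (hL : Convex ℝ L) (hx : x ∈ K ∩ L) :
    genFace (K ∩ L) x = genFace K x ∩ genFace L x := by
  ext y
  rw [mem_inter_iff, mem_genFace (hK.inter hL) hx, mem_genFace hK hx.1, mem_genFace hL hx.2,
    feasibleCone_inter hK hL hx, mem_inter_iff, Submodule.mem_inf, and_and_and_comm]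

lemma exists_add_sub_mem_genFace (hK : Convex ℝ K) (hx : x ∈ K) {v : V}
    (hv : v ∈ (feasibleCone ℝ K x).lineal) :
    ∃ ε : ℝ, 0 < ε ∧ x + ε • v ∈ genFace K x ∧ x - ε • v ∈ genFace K x := by
  obtain ⟨hv, hnv⟩ := hv
  obtain ⟨ε, ⟨hadd, hsub⟩, hε : 0 < ε⟩ :=
    (((mem_feasibleCone_iff_eventually hK hx).1 hv).and
      ((mem_feasibleCone_iff_eventually hK hx).1 hnv) |>.and self_mem_nhdsWithin).exists
  refine ⟨ε, hε, (mem_genFace hK hx).2 ⟨hadd, ?_⟩, (mem_genFace hK hx).2 ⟨?_, ?_⟩⟩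
  · simpa using (feasibleCone ℝ K x).smul_mem hε.le hnv
  · simpa [sub_eq_add_neg] using hsub
  · simpa using (feasibleCone ℝ K x).smul_mem hε.le hv

lemma affineSpan_genFace (hK : Convex ℝ K) (hx : x ∈ K) :
    affineSpan ℝ (genFace K x) = AffineSubspace.mk' x (feasibleCone ℝ K x).lineal := by
  apply le_antisymm
  · rw [affineSpan_le]
    intro y hy
    obtain ⟨hyK, hxy⟩ := (mem_genFace hK hx).1 hy
    exact AffineSubspace.mem_mk'.2 ⟨sub_mem_feasibleCone hyK, by simpa using hxy⟩
  · intro y hy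
    obtain ⟨ε, hε, hadd, -⟩ := exists_add_sub_mem_genFace hK hx (AffineSubspace.mem_mk'.1 hy)
    convert AffineMap.lineMap_mem ε⁻¹ (subset_affineSpan ℝ _ (self_mem_genFace K x))
      (subset_affineSpan ℝ _ hadd) using 1
    simp [AffineMap.lineMap_apply, hε.ne']

lemma affineSpan_genFace_inter (hK : Convex ℝ K) (hL : Convex ℝ L) (hx : x ∈ K ∩ L) :
    affineSpan ℝ (genFace (K ∩ L) x) =
      affineSpan ℝ (genFace K x) ⊓ affineSpan ℝ (genFace L x) := by
  ext y
  simp only [affineSpan_genFace (hK.inter hL) hx, affineSpan_genFace hK hx.1,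
    affineSpan_genFace hL hx.2, feasibleCone_inter hK hL hx, AffineSubspace.mem_inf_iff,
    AffineSubspace.mem_mk', PointedCone.mem_lineal, Submodule.mem_inf, and_and_and_comm]

lemma self_mem_riSet_genFace (hK : Convex ℝ K) (hx : x ∈ K) : x ∈ riSet (genFace K x) := by
  refine ⟨self_mem_genFace K x, fun y hy ↦ exists_add_sub_mem_genFace hK hx ?_⟩
  rwa [affineSpan_genFace hK hx, AffineSubspace.mem_mk'] at hy

lemma mem_riSet_genFace (hK : Convex ℝ K) (hx : x ∈ K) :
    y ∈ riSet (genFace K x) ↔ y ∈ genFace K x ∧ x ∈ genFace K y := by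
  constructor
  · rintro ⟨hy, hri⟩
    obtain ⟨ε, hε, -, hsub⟩ := hri x (subset_affineSpan ℝ _ (self_mem_genFace K x))
    have hyK : y ∈ K := genFace_subset hK hx hy
    refine ⟨hy, (mem_genFace hK hyK).2 ⟨hx, (mem_feasibleCone_iff_exists hK hyK).2 ⟨ε, hε, ?_⟩⟩⟩
    convert genFace_subset hK hx hsub using 1
    module
  · rintro ⟨hy, hxy⟩
    have hyK : y ∈ K := genFace_subset hK hx hy
    have heq : genFace K x = genFace K y :=
      (genFace_subset_genFace hK hyK hxy).antisymm (genFace_subset_genFace hK hx hy)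
    exact heq ▸ self_mem_riSet_genFace hK hyK

lemma riSet_genFace_inter (hK : Convex ℝ K) (hL : Convex ℝ L) (hx : x ∈ K ∩ L) :
    riSet (genFace (K ∩ L) x) = riSet (genFace K x) ∩ riSet (genFace L x) := by
  ext y
  rw [mem_inter_iff, mem_riSet_genFace (hK.inter hL) hx, mem_riSet_genFace hK hx.1,
    mem_riSet_genFace hL hx.2, genFace_inter hK hL hx, mem_inter_iff, and_and_and_comm]
  refine and_congr_right fun hy ↦ ?_
  rw [genFace_inter hK hL ⟨genFace_subset hK hx.1 hy.1, genFace_subset hL hx.2 hy.2⟩,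
    mem_inter_iff]

end GeneratedFace

theorem stmt8 (K L : Set V) (hK : Convex ℝ K) (hL : Convex ℝ L)
    (x : V) (hx : x ∈ K ∩ L) :
    genFace (K ∩ L) x = genFace K x ∩ genFace L x ∧
    riSet (genFace K x ∩ genFace L x) = riSet (genFace K x) ∩ riSet (genFace L x) ∧
    (affineSpan ℝ (genFace K x ∩ genFace L x) : Set V) =
      (affineSpan ℝ (genFace K x) : Set V) ∩ (affineSpan ℝ (genFace L x) : Set V) := by
  rw [← genFace_inter hK hL hx]
  exact ⟨rfl, riSet_genFace_inter hK hL hx, congrArg _ (affineSpan_genFace_inter hK hL hx)⟩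
end

section
/- Let V be a real vector space, K ⊆ V a nonempty convex set, and o ∈ V a point outside the affine hull of K. Then the set of faces of the pyramid P(K,o) is the union of the set 𝓕₁ of faces of K and the set 𝓕₂ = {P(F,o) : F ∈ 𝓕₁} of pyramids over faces of K (where P(∅,o) = {o}). That is, a subset G ⊆ P(K,o) is a face of P(K,o) if and only if G is a face of K or G = P(F,o) for some face F of K. -/
variable {V : Type*} [AddCommGroup V] [Module ℝ V]

/-- The pyramid with apex `o` over `F`: the union of all closed segments
joining points of `F` with `o`; by convention `pyr ∅ o = {o}`. -/
def pyr (F : Set V) (o : V) : Set V := {o} ∪ ⋃ x ∈ F, segment ℝ x o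

/-!
Since `o` lies outside the affine hull of `K`, some affine function `f` vanishes on `K` and equals
`1` at `o`; on the pyramid it takes values in `[0, 1]` and measures the height above the base `K`.
The base is the zero set of `f`, hence extreme, so faces of `K` are faces of the pyramid. For a face
`F` of `K`, comparing heights in a segment through a point of `P(F, o)` and removing the multiples
of `o` leaves a positive multiple of a point of `F` as a nonnegative combination of points of `K`,
to which extremeness of `F` applies.
Conversely, a face `G` containing a point strictly between `x ∈ K` and `o` contains both `x` and
`o`, so `G ⊆ K` if `o ∉ G`, and `G = P(G ∩ K, o)` if `o ∈ G`.
-/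

open Set AffineMap

section OrderedField

variable {k E P : Type*} [Field k] [AddCommGroup E] [Module k E]

theorem exists_affineMap_eqOn_zero_eq_one_of_notMem [AddTorsor E P] {s : AffineSubspace k P}
    {o : P} (ho : o ∉ s) : ∃ f : P →ᵃ[k] k, EqOn f 0 s ∧ f o = 1 := by
  rcases (s : Set P).eq_empty_or_nonempty with hs | ⟨p, hp⟩
  · exact ⟨const k P 1, by simp [hs], rfl⟩
  have hop : o -ᵥ p ∉ s.direction := fun h =>
    ho ((AffineSubspace.vsub_right_mem_direction_iff_mem hp o).1 h)
  obtain ⟨g, hg, hgo⟩ := LinearMap.exists_extend_of_notMem (0 : s.direction →ₗ[k] k) hop 1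
  refine ⟨g.toAffineMap.comp (AffineEquiv.vaddConst k p).symm.toAffineMap, fun q hq => ?_, hgo⟩
  exact LinearMap.congr_fun hg ⟨q -ᵥ p, AffineSubspace.vsub_mem_direction hq hp⟩

variable [LinearOrder k] [IsStrictOrderedRing k] {A B : Set E}

theorem isExtreme_sep_affineMap_eq_zero {f : E →ᵃ[k] k} (hf : ∀ p ∈ A, 0 ≤ f p) :
    IsExtreme k A {p ∈ A | f p = 0} := by
  refine ⟨sep_subset _ _, ?_⟩
  rintro x hx y hy _ ⟨-, hz⟩ ⟨a, b, ha, hb, hab, rfl⟩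
  rw [Convex.combo_affine_apply hab, smul_eq_mul, smul_eq_mul,
    add_eq_zero_iff_of_nonneg (mul_nonneg ha.le (hf x hx)) (mul_nonneg hb.le (hf y hy))] at hz
  exact ⟨hx, (mul_eq_zero.1 hz.1).resolve_left ha.ne'⟩

theorem mem_of_isExtreme_of_add_smul_eq_add (hAB : IsExtreme k A B) {x y z : E} {a b : k}
    (hx : x ∈ A) (hy : y ∈ A) (hz : z ∈ B) (ha : 0 < a) (hb : 0 ≤ b)
    (h : (a + b) • z = a • x + b • y) : x ∈ B := by
  rcases hb.eq_or_lt with rfl | hb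
  · have hzx : z = x := smul_right_injective E ha.ne' (by simpa using h)
    exact hzx ▸ hz
  refine hAB.left_mem_of_mem_openSegment hx hy hz
    (mem_openSegment_iff_div.2 ⟨a, b, ha, hb, ?_⟩)
  rw [div_eq_inv_mul, div_eq_inv_mul, mul_smul, mul_smul, ← smul_add, ← h,
    inv_smul_smul₀ (add_pos ha hb).ne']

end OrderedField

theorem isExtremeSubset_iff_isExtreme {K E : Set V} : IsExtremeSubset K E ↔ IsExtreme ℝ K E := by
  rw [IsExtremeSubset, isExtreme_iff]
  refine and_congr_right fun _ => ⟨fun h y hy z hz x hx hxyz => ?_, ?_⟩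
  · rw [openSegment_eq_image] at hxyz
    obtain ⟨l, hl, hxyz⟩ := hxyz
    exact (h x hx y hy z hz l hl hxyz.symm).1
  · rintro h x hx y hy z hz l hl rfl
    have hyz : (1 - l) • y + l • z ∈ openSegment ℝ y z :=
      openSegment_eq_image ℝ y z ▸ mem_image_of_mem _ hl
    exact ⟨h hy hz hx hyz, h hz hy hx (openSegment_symm ℝ y z ▸ hyz)⟩

theorem isFaceOf_iff_convex_and_isExtreme {K F : Set V} :
    IsFaceOf K F ↔ Convex ℝ F ∧ IsExtreme ℝ K F :=
  and_congr_right' isExtremeSubset_iff_isExtreme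

section Pyramid

variable {K F G : Set V} {o p x : V}

theorem apex_mem_pyr : o ∈ pyr F o := mem_union_left _ rfl

theorem segment_apex_subset_pyr (hx : x ∈ F) : segment ℝ x o ⊆ pyr F o :=
  (subset_biUnion_of_mem (u := fun x => segment ℝ x o) hx).trans subset_union_right

theorem subset_pyr : F ⊆ pyr F o := fun x hx =>
  segment_apex_subset_pyr hx (left_mem_segment ℝ x o)

theorem pyr_mono (hFK : F ⊆ K) : pyr F o ⊆ pyr K o :=
  union_subset_union_right _ (biUnion_subset_biUnion_left hFK)

theorem pyr_subset (hG : Convex ℝ G) (hFG : F ⊆ G) (ho : o ∈ G) : pyr F o ⊆ G :=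
  union_subset (singleton_subset_iff.2 ho)
    (iUnion₂_subset fun _ hx => hG.segment_subset (hFG hx) ho)

theorem pyr_eq_convexJoin (hF : F.Nonempty) : pyr F o = convexJoin ℝ F {o} := by
  rw [convexJoin_singleton_right, pyr, union_eq_right, singleton_subset_iff]
  exact mem_biUnion hF.some_mem (right_mem_segment ℝ _ o)

theorem convex_pyr (hF : Convex ℝ F) : Convex ℝ (pyr F o) := by
  rcases F.eq_empty_or_nonempty with rfl | hne
  · simp [pyr]
  · exact pyr_eq_convexJoin hne ▸ hF.convexJoin (convex_singleton o)

theorem eq_apex_or_exists_lineMap_of_mem_pyr (hp : p ∈ pyr F o) :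
    p = o ∨ ∃ x ∈ F, ∃ t ∈ Ico (0 : ℝ) 1, lineMap x o t = p := by
  refine or_iff_not_imp_left.2 fun hpo => ?_
  obtain ⟨x, hx, hp⟩ := mem_iUnion₂.1 (hp.resolve_left hpo)
  rw [segment_eq_image_lineMap] at hp
  obtain ⟨t, ⟨ht₀, ht₁⟩, rfl⟩ := hp
  have ht : t ≠ 1 := by
    rintro rfl
    exact hpo (lineMap_apply_one x o)
  exact ⟨x, hx, t, ⟨ht₀, ht₁.lt_of_ne ht⟩, rfl⟩

theorem exists_lineMap_of_mem_pyr (hF : F.Nonempty) (hp : p ∈ pyr F o) :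
    ∃ x ∈ F, ∃ t ∈ Icc (0 : ℝ) 1, lineMap x o t = p := by
  rcases eq_apex_or_exists_lineMap_of_mem_pyr hp with rfl | ⟨x, hx, t, ht, rfl⟩
  · obtain ⟨x, hx⟩ := hF
    exact ⟨x, hx, 1, right_mem_Icc.2 zero_le_one, lineMap_apply_one x p⟩
  · exact ⟨x, hx, t, Ico_subset_Icc_self ht, rfl⟩

theorem base_mem_of_isExtreme_pyr (hG : IsExtreme ℝ (pyr K o) G) (hx : x ∈ K) {t : ℝ}
    (ht : t ∈ Ico (0 : ℝ) 1) (hp : lineMap x o t ∈ G) : x ∈ G := by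
  rcases ht.1.eq_or_lt with rfl | ht₀
  · rwa [lineMap_apply_zero] at hp
  · exact hG.left_mem_of_mem_openSegment (subset_pyr hx) apex_mem_pyr hp
      (lineMap_mem_openSegment ℝ x o ⟨ht₀, ht.2⟩)

theorem subset_pyr_inter_of_isExtreme_pyr (hG : IsExtreme ℝ (pyr K o) G) :
    G ⊆ pyr (G ∩ K) o := by
  intro p hp
  rcases eq_apex_or_exists_lineMap_of_mem_pyr (hG.subset hp) with rfl | ⟨x, hx, t, ht, rfl⟩
  · exact apex_mem_pyr
  · have hxG : x ∈ G := base_mem_of_isExtreme_pyr hG hx ht hp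
    exact segment_apex_subset_pyr (mem_inter hxG hx)
      (lineMap_mem_segment ℝ x o (Ico_subset_Icc_self ht))

theorem subset_base_of_isExtreme_pyr (hG : IsExtreme ℝ (pyr K o) G) (ho : o ∉ G) : G ⊆ K := by
  intro p hp
  rcases eq_apex_or_exists_lineMap_of_mem_pyr (hG.subset hp) with rfl | ⟨x, hx, t, ht, rfl⟩
  · exact absurd hp ho
  rcases ht.1.eq_or_lt with rfl | ht₀
  · rwa [lineMap_apply_zero]
  · exact absurd (hG.right_mem_of_mem_openSegment (subset_pyr hx) apex_mem_pyr hp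
      (lineMap_mem_openSegment ℝ x o ⟨ht₀, ht.2⟩)) ho

/-- `f` is a height function for the pyramid over `K` with apex `o`: an affine function that
vanishes on `K` and is normalized to `1` at `o`. -/
structure IsHeight (f : V →ᵃ[ℝ] ℝ) (K : Set V) (o : V) : Prop where
  eqOn_zero : EqOn f 0 K
  apply_apex : f o = 1

theorem exists_isHeight (ho : o ∉ affineSpan ℝ K) : ∃ f : V →ᵃ[ℝ] ℝ, IsHeight f K o := by
  obtain ⟨f, hf, hfo⟩ := exists_affineMap_eqOn_zero_eq_one_of_notMem ho
  exact ⟨f, hf.mono (subset_affineSpan ℝ K), hfo⟩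

namespace IsHeight

variable {f : V →ᵃ[ℝ] ℝ}

theorem apply_lineMap (hf : IsHeight f K o) (hx : x ∈ K) (t : ℝ) : f (lineMap x o t) = t := by
  rw [f.apply_lineMap, hf.eqOn_zero hx, hf.apply_apex, Pi.zero_apply, lineMap_apply_ring']
  ring

theorem nonneg (hf : IsHeight f K o) (hp : p ∈ pyr K o) : 0 ≤ f p := by
  rcases eq_apex_or_exists_lineMap_of_mem_pyr hp with rfl | ⟨x, hx, t, ht, rfl⟩
  · exact hf.apply_apex ▸ zero_le_one
  · exact (hf.apply_lineMap hx t).symm ▸ ht.1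

theorem sep_pyr_eq_zero (hf : IsHeight f K o) : {p ∈ pyr K o | f p = 0} = K := by
  refine Subset.antisymm ?_ fun x hx => ⟨subset_pyr hx, hf.eqOn_zero hx⟩
  rintro p ⟨hp, hfp⟩
  rcases eq_apex_or_exists_lineMap_of_mem_pyr hp with rfl | ⟨x, hx, t, -, rfl⟩
  · exact absurd (hf.apply_apex.symm.trans hfp) one_ne_zero
  · rw [hf.apply_lineMap hx] at hfp
    rwa [hfp, lineMap_apply_zero]

theorem isExtreme_base (hf : IsHeight f K o) : IsExtreme ℝ (pyr K o) K := by
  have h := isExtreme_sep_affineMap_eq_zero fun p (hp : p ∈ pyr K o) => hf.nonneg hp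
  rwa [hf.sep_pyr_eq_zero] at h

theorem convex_inter_base (hf : IsHeight f K o) (hG : Convex ℝ G) (hGK : G ⊆ pyr K o) :
    Convex ℝ (G ∩ K) := by
  have hinter : G ∩ K = G ∩ f ⁻¹' {0} := calc
    G ∩ K = G ∩ (pyr K o ∩ f ⁻¹' {0}) := congrArg (G ∩ ·) hf.sep_pyr_eq_zero.symm
    _ = G ∩ f ⁻¹' {0} := by rw [← inter_assoc, inter_eq_left.2 hGK]
  exact hinter ▸ hG.inter ((convex_singleton 0).affine_preimage f)

theorem isExtreme_pyr (hf : IsHeight f K o) (hF : IsExtreme ℝ K F) :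
    IsExtreme ℝ (pyr K o) (pyr F o) := by
  refine ⟨pyr_mono hF.subset, ?_⟩
  rintro y hy z hz p hp ⟨l, m, hl, hm, hlm, hpyz⟩
  rcases eq_apex_or_exists_lineMap_of_mem_pyr hy with rfl | ⟨a, ha, s, hs, rfl⟩
  · exact apex_mem_pyr
  obtain ⟨b, hb, r, hr, rfl⟩ := exists_lineMap_of_mem_pyr ⟨a, ha⟩ hz
  have hfp : f p = l * s + m * r := by
    rw [← hpyz, Convex.combo_affine_apply hlm, hf.apply_lineMap ha, hf.apply_lineMap hb]
    rfl
  have hl' : 0 < l * (1 - s) := mul_pos hl (sub_pos.2 hs.2)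
  have hm' : 0 ≤ m * (1 - r) := mul_nonneg hm.le (sub_nonneg.2 hr.2)
  have hsum : l * (1 - s) + m * (1 - r) = 1 - f p := by linear_combination hlm + hfp
  rcases eq_apex_or_exists_lineMap_of_mem_pyr hp with rfl | ⟨x, hx, t, -, rfl⟩
  · linarith [hf.apply_apex]
  rw [hf.apply_lineMap (hF.subset hx)] at hfp hsum
  have hbase : (l * (1 - s) + m * (1 - r)) • x = (l * (1 - s)) • a + (m * (1 - r)) • b := by
    simp only [lineMap_apply_module] at hpyz
    rw [hsum]
    linear_combination (norm := module) -hpyz - hfp • o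
  exact segment_apex_subset_pyr (mem_of_isExtreme_of_add_smul_eq_add hF ha hb hx hl' hm' hbase)
    (lineMap_mem_segment ℝ a o (Ico_subset_Icc_self hs))

end IsHeight

end Pyramid

theorem stmt15_general (K : Set V) (o : V) (ho : o ∉ affineSpan ℝ K) (G : Set V) :
    IsFaceOf (pyr K o) G ↔
      (IsFaceOf K G ∨ ∃ F : Set V, IsFaceOf K F ∧ G = pyr F o) := by
  obtain ⟨f, hf⟩ := exists_isHeight ho
  simp only [isFaceOf_iff_convex_and_isExtreme]
  constructor
  · rintro ⟨hconv, hext⟩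
    have hext' : IsExtreme ℝ K (G ∩ K) :=
      (hext.inter hf.isExtreme_base).mono subset_pyr inter_subset_right
    have hconv' : Convex ℝ (G ∩ K) := hf.convex_inter_base hconv hext.subset
    by_cases hoG : o ∈ G
    · exact .inr ⟨G ∩ K, ⟨hconv', hext'⟩, (subset_pyr_inter_of_isExtreme_pyr hext).antisymm
        (pyr_subset hconv inter_subset_left hoG)⟩
    · exact .inl ⟨hconv, inter_eq_left.2 (subset_base_of_isExtreme_pyr hext hoG) ▸ hext'⟩
  · rintro (⟨hconv, hext⟩ | ⟨F, ⟨hconv, hext⟩, rfl⟩)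
    · exact ⟨hconv, hf.isExtreme_base.trans hext⟩
    · exact ⟨convex_pyr hconv, hf.isExtreme_pyr hext⟩

theorem stmt15 (K : Set V) (hK : Convex ℝ K) (hne : K.Nonempty)
    (o : V) (ho : o ∉ affineSpan ℝ K) :
    ∀ G : Set V, IsFaceOf (pyr K o) G ↔
      (IsFaceOf K G ∨ ∃ F : Set V, IsFaceOf K F ∧ G = pyr F o) :=
  stmt15_general K o ho
end
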